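/- arXiv:2509.05988 — 3 statements merged into one kernel-verified Lean document; each statement's English description precedes it below -/
import Mathlib

section
/- Let d ≥ 1 and let S, Ŝ ∈ ℂ^{d×d} be positive semidefinite Hermitian matrices with Tr(S) > 0 and Tr(Ŝ) > 0. Define F₁(Ŝ, S) = (Tr √(√Ŝ S √Ŝ))² / (Tr(Ŝ) Tr(S)) − (Tr(S − Ŝ))² / d². Then F₁(Ŝ, S) = 1 if and only if Ŝ = S. -/
open Matrix ComplexOrder

/-- The positive semidefinite square root of a matrix (junk value `0` if the matrix is
not positive semidefinite). -/
noncomputable def matSqrt {n : Type*} [Fintype n] [DecidableEq n]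
    (M : Matrix n n ℂ) : Matrix n n ℂ :=
  open scoped Classical MatrixOrder in
  if h : M.PosSemidef then CFC.sqrt M else 0

/-!
By the polar decomposition, `Tr √(√Ŝ S √Ŝ)` is the Frobenius inner product of `√Ŝ` with some `Y`
satisfying `Y * Yᴴ = S`. The Cauchy–Schwarz inequality then bounds the normalized fidelity by `1`,
with equality only if `Y` is a multiple of `√Ŝ`, in which case `S` is a multiple of `Ŝ`. Subtracting
a nonnegative penalty leaves the value `1` only if the penalty vanishes and this equality case
occurs, and the equality of the traces then forces the factor to be `1`.
-/

section Polar

variable {𝕜 : Type*} [RCLike 𝕜]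

theorem exists_linearIsometryEquiv_apply_eq_of_norm_eq {V W : Type*} [AddCommGroup V] [Module 𝕜 V]
    [NormedAddCommGroup W] [InnerProductSpace 𝕜 W] [FiniteDimensional 𝕜 W] {f g : V →ₗ[𝕜] W}
    (h : ∀ x, ‖f x‖ = ‖g x‖) : ∃ T : W ≃ₗᵢ[𝕜] W, ∀ x, T (f x) = g x := by
  obtain ⟨s, hs⟩ := f.rangeRestrict.exists_rightInverse_of_surjective f.range_rangeRestrict
  have hfs (y : f.range) : f (s y) = y := congrArg Subtype.val (LinearMap.congr_fun hs y)
  let L : f.range →ₗᵢ[𝕜] W := ⟨g ∘ₗ s, fun y ↦ by simp [← h, hfs]⟩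
  refine ⟨L.extend.toLinearIsometryEquiv rfl, fun x ↦ ?_⟩
  have hL : L.extend (f x) = g (s (f.rangeRestrict x)) := L.extend_apply (f.rangeRestrict x)
  have hzero : ‖g (s (f.rangeRestrict x) - x)‖ = 0 := by
    rw [← h, map_sub, hfs, LinearMap.codRestrict_apply, sub_self, norm_zero]
  rwa [norm_eq_zero, map_sub, sub_eq_zero, ← hL] at hzero

theorem norm_apply_eq_of_adjoint_comp_self_eq {V W : Type*} [NormedAddCommGroup V]
    [InnerProductSpace 𝕜 V] [FiniteDimensional 𝕜 V] [NormedAddCommGroup W] [InnerProductSpace 𝕜 W]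
    [FiniteDimensional 𝕜 W] {f g : V →ₗ[𝕜] W} (h : f.adjoint ∘ₗ f = g.adjoint ∘ₗ g) (x : V) :
    ‖f x‖ = ‖g x‖ := by
  have hinner : inner 𝕜 (f x) (f x) = inner 𝕜 (g x) (g x) := by
    simp only [← LinearMap.adjoint_inner_right, ← LinearMap.comp_apply, h]
  rw [norm_eq_sqrt_re_inner (𝕜 := 𝕜), hinner, ← norm_eq_sqrt_re_inner]

theorem exists_mem_unitaryGroup_mul_eq_of_conjTranspose_mul_self_eq {m n : Type*} [Fintype m]
    [DecidableEq m] [Finite n] {A B : Matrix m n 𝕜} (h : Aᴴ * A = Bᴴ * B) :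
    ∃ U ∈ unitaryGroup m 𝕜, U * A = B := by
  classical
  have := Fintype.ofFinite n
  have hadj : (toEuclideanLin A).adjoint ∘ₗ toEuclideanLin A =
      (toEuclideanLin B).adjoint ∘ₗ toEuclideanLin B := by
    simp only [← toEuclideanLin_conjTranspose_eq_adjoint, ← toLpLin_mul_same, h]
  obtain ⟨T, hT⟩ := exists_linearIsometryEquiv_apply_eq_of_norm_eq
    (norm_apply_eq_of_adjoint_comp_self_eq hadj)
  let b := EuclideanSpace.basisFun m 𝕜
  have hTb : toEuclideanLin (T.toMatrix b.toBasis b.toBasis) = T.toLinearEquiv.toLinearMap :=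
    toLin_toMatrix b.toBasis b.toBasis _
  refine ⟨_, T.toMatrix_mem_unitaryGroup b b, toEuclideanLin.injective (LinearMap.ext fun x ↦ ?_)⟩
  rw [toLpLin_mul_same, LinearMap.comp_apply, hTb]
  exact hT x

end Polar

section Frobenius

variable {𝕜 m n : Type*} [RCLike 𝕜] [Fintype m] [Fintype n]

theorem inner_toLp_vec (A B : Matrix m n 𝕜) :
    inner 𝕜 (WithLp.toLp 2 (vec A)) (WithLp.toLp 2 (vec B)) = (Aᴴ * B).trace := by
  rw [EuclideanSpace.inner_toLp_toLp, dotProduct_comm, star_vec_dotProduct_vec]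

theorem norm_toLp_vec_sq (A : Matrix m n 𝕜) :
    ‖WithLp.toLp 2 (vec A)‖ ^ 2 = RCLike.re (A * Aᴴ).trace := by
  rw [← inner_self_eq_norm_sq (𝕜 := 𝕜), inner_toLp_vec, trace_mul_comm]

theorem norm_trace_conjTranspose_mul_sq_le (A B : Matrix m n 𝕜) :
    ‖(Aᴴ * B).trace‖ ^ 2 ≤ RCLike.re (A * Aᴴ).trace * RCLike.re (B * Bᴴ).trace := by
  rw [← inner_toLp_vec, ← norm_toLp_vec_sq, ← norm_toLp_vec_sq, ← mul_pow]
  gcongr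
  exact norm_inner_le_norm _ _

theorem exists_eq_smul_of_norm_trace_conjTranspose_mul_sq_eq {A B : Matrix m n 𝕜}
    (hA : A ≠ 0) (hB : B ≠ 0)
    (h : ‖(Aᴴ * B).trace‖ ^ 2 = RCLike.re (A * Aᴴ).trace * RCLike.re (B * Bᴴ).trace) :
    ∃ c : 𝕜, c ≠ 0 ∧ B = c • A := by
  rw [← inner_toLp_vec, ← norm_toLp_vec_sq, ← norm_toLp_vec_sq, ← mul_pow,
    sq_eq_sq₀ (by positivity) (by positivity), norm_inner_eq_norm_iff (by simpa) (by simpa)] at h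
  obtain ⟨c, hc, hBc⟩ := h
  exact ⟨c, hc, vec_inj.1 (WithLp.toLp_injective 2 hBc)⟩

end Frobenius

section Fidelity

open scoped MatrixOrder

variable {n : Type*} [Fintype n] [DecidableEq n]

theorem matSqrt_eq_sqrt {M : Matrix n n ℂ} (hM : M.PosSemidef) : matSqrt M = CFC.sqrt M :=
  dif_pos hM

theorem posSemidef_matSqrt (M : Matrix n n ℂ) : (matSqrt M).PosSemidef := by
  unfold matSqrt
  split_ifs
  exacts [(CFC.sqrt_nonneg M).posSemidef, .zero]

theorem conjTranspose_matSqrt (M : Matrix n n ℂ) : (matSqrt M)ᴴ = matSqrt M :=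
  (posSemidef_matSqrt M).isHermitian.eq

theorem matSqrt_mul_matSqrt {M : Matrix n n ℂ} (hM : M.PosSemidef) :
    matSqrt M * matSqrt M = M := by
  rw [matSqrt_eq_sqrt hM, CFC.sqrt_mul_sqrt_self M hM.nonneg]

theorem matSqrt_mul_self {M : Matrix n n ℂ} (hM : M.PosSemidef) : matSqrt (M * M) = M := by
  have hMM : (M * M).PosSemidef := by
    simpa only [hM.isHermitian.eq] using posSemidef_conjTranspose_mul_self M
  rw [matSqrt_eq_sqrt hMM, CFC.sqrt_mul_self M hM.nonneg]

/-- The normalized fidelity `F_{d,p}(Ŝ, S) = (Tr √(√Ŝ S √Ŝ))² / (Tr Ŝ · Tr S)` of two positive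
semidefinite matrices, encoded as a real number through the real parts of the traces (junk value `0`
if `Ŝ` or `S` has trace `0`). -/
noncomputable def normalizedFidelity (Shat S : Matrix n n ℂ) : ℝ :=
  (matSqrt (matSqrt Shat * S * matSqrt Shat)).trace.re ^ 2 / (Shat.trace.re * S.trace.re)

variable {Shat S : Matrix n n ℂ}

/-- One half of Uhlmann's theorem: the purification `Y` of `S` attains the fidelity against the
purification `√Ŝ` of `Ŝ`. -/
theorem exists_mul_conjTranspose_eq_and_matSqrt_mul_eq (Shat : Matrix n n ℂ)
    (hS : S.PosSemidef) :
    ∃ Y : Matrix n n ℂ, Y * Yᴴ = S ∧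
      matSqrt Shat * Y = matSqrt (matSqrt Shat * S * matSqrt Shat) := by
  set A := matSqrt Shat
  set B := matSqrt S
  set P := matSqrt (A * S * A)
  have hA : Aᴴ = A := conjTranspose_matSqrt Shat
  have hB : Bᴴ = B := conjTranspose_matSqrt S
  have hP : Pᴴ = P := conjTranspose_matSqrt _
  have hBB : B * B = S := matSqrt_mul_matSqrt hS
  have hPP : P * P = A * S * A :=
    matSqrt_mul_matSqrt (by simpa only [hA] using hS.conjTranspose_mul_mul_same A)
  have hgram : (B * A)ᴴ * (B * A) = Pᴴ * P := by
    rw [hP, hPP, ← hBB, conjTranspose_mul, hA, hB]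
    simp only [Matrix.mul_assoc]
  obtain ⟨U, hU, hUBA⟩ := exists_mem_unitaryGroup_mul_eq_of_conjTranspose_mul_self_eq hgram
  refine ⟨B * Uᴴ, ?_, ?_⟩
  · rw [conjTranspose_mul, conjTranspose_conjTranspose, hB, Matrix.mul_assoc,
      ← Matrix.mul_assoc Uᴴ, ← star_eq_conjTranspose, mem_unitaryGroup_iff'.1 hU, Matrix.one_mul,
      hBB]
  · rw [← hP, ← hUBA, conjTranspose_mul, conjTranspose_mul, hA, hB, Matrix.mul_assoc]

theorem exists_normalizedFidelity_eq_norm_trace_sq_div (hShat : Shat.PosSemidef)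
    (hS : S.PosSemidef) : ∃ X Y : Matrix n n ℂ, X * Xᴴ = Shat ∧ Y * Yᴴ = S ∧
      normalizedFidelity Shat S = ‖(Xᴴ * Y).trace‖ ^ 2 / (Shat.trace.re * S.trace.re) := by
  obtain ⟨Y, hYY, hXY⟩ := exists_mul_conjTranspose_eq_and_matSqrt_mul_eq Shat hS
  refine ⟨matSqrt Shat, Y, ?_, hYY, ?_⟩
  · rw [conjTranspose_matSqrt, matSqrt_mul_matSqrt hShat]
  · have hnorm : ‖(matSqrt (matSqrt Shat * S * matSqrt Shat)).trace‖ =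
        (matSqrt (matSqrt Shat * S * matSqrt Shat)).trace.re :=
      congrArg Complex.re (RCLike.norm_of_nonneg' (posSemidef_matSqrt _).trace_nonneg)
    rw [conjTranspose_matSqrt, hXY, hnorm, normalizedFidelity]

theorem normalizedFidelity_le_one (hShat : Shat.PosSemidef) (hS : S.PosSemidef) :
    normalizedFidelity Shat S ≤ 1 := by
  obtain ⟨X, Y, rfl, rfl, hF⟩ := exists_normalizedFidelity_eq_norm_trace_sq_div hShat hS
  have hCS := norm_trace_conjTranspose_mul_sq_le X Y
  exact hF.trans_le (div_le_one_of_le₀ hCS ((sq_nonneg _).trans hCS))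

theorem exists_eq_smul_of_normalizedFidelity_eq_one (hShat : Shat.PosSemidef) (hS : S.PosSemidef)
    (h : normalizedFidelity Shat S = 1) : ∃ r : ℝ, 0 < r ∧ S = r • Shat := by
  obtain ⟨X, Y, rfl, rfl, hF⟩ := exists_normalizedFidelity_eq_norm_trace_sq_div hShat hS
  rw [hF] at h
  have hX : X ≠ 0 := by rintro rfl; simp at h
  have hY : Y ≠ 0 := by rintro rfl; simp at h
  obtain ⟨c, hc, rfl⟩ :=
    exists_eq_smul_of_norm_trace_conjTranspose_mul_sq_eq hX hY (eq_of_div_eq_one h)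
  refine ⟨Complex.normSq c, Complex.normSq_pos.2 hc, ?_⟩
  rw [conjTranspose_smul, smul_mul_smul_comm, ← Complex.coe_smul, Complex.star_def,
    Complex.mul_conj]

theorem normalizedFidelity_self (hS : S.PosSemidef) (htS : 0 < S.trace.re) :
    normalizedFidelity S S = 1 := by
  have hsqrt := matSqrt_mul_matSqrt hS
  have hconj : matSqrt S * S * matSqrt S = S * S := by
    nth_rw 2 [← hsqrt]
    rw [← Matrix.mul_assoc, hsqrt, Matrix.mul_assoc, hsqrt]
  rw [normalizedFidelity, hconj, matSqrt_mul_self hS, ← sq, div_self (pow_pos htS 2).ne']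

theorem stmt4_general (hS : S.PosSemidef) (hShat : Shat.PosSemidef) (htS : 0 < S.trace.re)
    (htShat : 0 < Shat.trace.re) {c : ℝ} (hc : 0 < c) :
    normalizedFidelity Shat S - ((S - Shat).trace.re) ^ 2 / c = 1 ↔ Shat = S := by
  refine ⟨fun h ↦ ?_, ?_⟩
  · have hle := normalizedFidelity_le_one hShat hS
    have hpenalty_nonneg : 0 ≤ (S - Shat).trace.re ^ 2 / c := by positivity
    have hpenalty : (S - Shat).trace.re ^ 2 / c = 0 := by linarith
    have htrace : S.trace.re - Shat.trace.re = 0 := by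
      simpa [trace_sub, hc.ne'] using hpenalty
    obtain ⟨r, -, rfl⟩ := exists_eq_smul_of_normalizedFidelity_eq_one hShat hS (by linarith)
    have hr : r * Shat.trace.re = 1 * Shat.trace.re := by
      rw [trace_smul, Complex.smul_re, smul_eq_mul] at htrace
      linarith
    rw [mul_right_cancel₀ htShat.ne' hr, one_smul]
  · rintro rfl
    simp [normalizedFidelity_self hS htS]

end Fidelity

/-- For positive semidefinite Hermitian `d × d` matrices `S, Ŝ` with positive traces, the
corrected fidelity `F₁(Ŝ, S) = (Tr √(√Ŝ S √Ŝ))² / (Tr(Ŝ) Tr(S)) − (Tr(S − Ŝ))² / d²`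
equals `1` if and only if `Ŝ = S`. -/
theorem stmt4 (d : ℕ) (hd : 1 ≤ d) (S Shat : Matrix (Fin d) (Fin d) ℂ)
    (hS : S.PosSemidef) (hShat : Shat.PosSemidef)
    (htS : 0 < S.trace.re) (htShat : 0 < Shat.trace.re) :
    ((matSqrt (matSqrt Shat * S * matSqrt Shat)).trace.re) ^ 2
        / (Shat.trace.re * S.trace.re)
      - ((S - Shat).trace.re) ^ 2 / (d : ℝ) ^ 2 = 1
    ↔ Shat = S :=
  stmt4_general hS hShat htS htShat (pow_pos (Nat.cast_pos.2 hd) 2)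
end

section
/- Let d ≥ 2 and let λ̃_1 ≥ λ̃_2 ≥ … ≥ λ̃_d be real numbers. Let k with 1 ≤ k ≤ d − 1 satisfy λ̃_{k+1} + (∑_{i=k+2}^{d} λ̃_i)/(k+1) < 0. Then ∑_{j=k+1}^{d} λ̃_j ≤ 0. -/
/-!
Call the terms other than the largest one the tail. If the tail sum were positive, then some tail
term, hence also the largest term, would be positive, and the largest term plus a positive multiple
of the tail sum could not be nonpositive. So the tail sum is nonpositive, and dividing it by a
number that is at least `1` can only increase it.
-/

section

variable {ι K : Type*} [Field K] [LinearOrder K] [IsStrictOrderedRing K]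
  {s : Finset ι} {f : ι → K} {c : K}

theorem sum_nonpos_of_add_sum_div_nonpos {a : K} (hf : ∀ i ∈ s, f i ≤ a) (hc : 0 < c)
    (h : a + (∑ i ∈ s, f i) / c ≤ 0) : ∑ i ∈ s, f i ≤ 0 := by
  by_contra! hsum
  obtain ⟨i, hi, hfi⟩ : ∃ i ∈ s, 0 < f i := by
    by_contra! hnonpos
    exact hsum.not_ge (Finset.sum_nonpos hnonpos)
  have ha : 0 < a := hfi.trans_le (hf i hi)
  exact h.not_gt (add_pos ha (div_pos hsum hc))

theorem stmt9_general [DecidableEq ι] {m : ι} (hm : m ∈ s) (hmax : ∀ i ∈ s, f i ≤ f m)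
    (hc : 1 ≤ c) (h : f m + (∑ i ∈ s.erase m, f i) / c ≤ 0) : ∑ i ∈ s, f i ≤ 0 := by
  have hc_pos : 0 < c := one_pos.trans_le hc
  have htail : ∑ i ∈ s.erase m, f i ≤ 0 :=
    sum_nonpos_of_add_sum_div_nonpos (fun i hi ↦ hmax i (Finset.mem_of_mem_erase hi)) hc_pos h
  have htail_le : ∑ i ∈ s.erase m, f i ≤ (∑ i ∈ s.erase m, f i) / c :=
    (le_div_iff₀ hc_pos).2 (mul_le_of_one_le_right htail hc)
  calc ∑ i ∈ s, f i = f m + ∑ i ∈ s.erase m, f i := (Finset.add_sum_erase s f hm).symm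
    _ ≤ f m + (∑ i ∈ s.erase m, f i) / c := by gcongr
    _ ≤ 0 := h

end

/-- Key combinatorial claim of the fast physical-projection (eigenvalue truncation)
algorithm: if `λ̃_1 ≥ … ≥ λ̃_d` and `1 ≤ k ≤ d − 1` satisfies
`λ̃_{k+1} + (∑_{i=k+2}^{d} λ̃_i)/(k+1) < 0`, then `∑_{j=k+1}^{d} λ̃_j ≤ 0`. -/
theorem stmt9 (d : ℕ) (hd : 2 ≤ d) (lam : ℕ → ℝ)
    (hmono : ∀ i j, 1 ≤ i → i ≤ j → j ≤ d → lam j ≤ lam i)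
    (k : ℕ) (hk1 : 1 ≤ k) (hk2 : k ≤ d - 1)
    (hneg : lam (k + 1) + (∑ i ∈ Finset.Icc (k + 2) d, lam i) / (k + 1) < 0) :
    ∑ j ∈ Finset.Icc (k + 1) d, lam j ≤ 0 := by
  have herase : (Finset.Icc (k + 1) d).erase (k + 1) = Finset.Icc (k + 2) d :=
    (Finset.Icc_erase_left _ _).trans (Finset.Icc_add_one_left_eq_Ioc _ _).symm
  exact stmt9_general (Finset.left_mem_Icc.2 (by lia))
    (fun j hj ↦ hmono (k + 1) j (by lia) (Finset.mem_Icc.1 hj).1 (Finset.mem_Icc.1 hj).2)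
    (by simp) (herase ▸ hneg.le)
end

section
/- Let d ≥ 1, let P̃ ∈ ℂ^{d×d} be a positive semidefinite Hermitian matrix with eigenvalues λ̃_1 ≥ … ≥ λ̃_d ≥ 0, let c > 0, and let S ∈ ℂ^{d×d} be any matrix with Frobenius norm ‖S‖ ≤ c. Let λ̂_1 ≥ … ≥ λ̂_d ≥ 0 be the eigenvalues of P̂ = S P̃ S†. Then for every r with 0 ≤ r ≤ d, ∑_{j=r+1}^{d} λ̂_j ≤ c² · ∑_{j=r+1}^{d} λ̃_j. -/
open Matrix ComplexOrder

/-- Frobenius norm of a complex matrix. -/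
noncomputable def frobNorm {m n : Type*} [Fintype m] [Fintype n]
    (M : Matrix m n ℂ) : ℝ :=
  Real.sqrt (∑ i, ∑ j, ‖M i j‖ ^ 2)

/-!
The `j`-th largest eigenvalue of a Hermitian operator is controlled by its quadratic form on
subspaces, as in the Courant–Fischer principle. Counting dimensions, there is a nonzero `y` in the
span of the eigenvectors of `S P S†` for its `j` largest eigenvalues such that `S† y` is orthogonal
to the eigenvectors of `P` for its `j - 1` largest eigenvalues. Then
`λ̂_j ‖y‖² ≤ ⟪S P S† y, y⟫ = ⟪P S† y, S† y⟫ ≤ λ̃_j ‖S† y‖² ≤ λ̃_j ‖S‖_op² ‖y‖²`,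
and the operator norm is at most the Frobenius norm.
-/

section QuadraticForm

open scoped InnerProductSpace

variable {𝕜 E ι : Type*} [RCLike 𝕜] [Fintype ι] [NormedAddCommGroup E] [InnerProductSpace 𝕜 E]
  (b : OrthonormalBasis ι 𝕜 E) {T : E →ₗ[𝕜] E} {l : ι → ℝ}

lemma inner_apply_of_eigenbasis (hT : ∀ i, T (b i) = (l i : 𝕜) • b i) (i : ι) (x : E) :
    ⟪b i, T x⟫_𝕜 = l i * ⟪b i, x⟫_𝕜 := by
  classical
  have hTx : T x = ∑ j, ⟪b j, x⟫_𝕜 • (l j : 𝕜) • b j := by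
    conv_lhs => rw [← b.sum_repr' x, map_sum]
    simp only [map_smul, hT]
  simp [hTx, inner_sum, inner_smul_right, b.inner_eq_ite, mul_comm]

lemma re_inner_apply_self_eq_sum (hT : ∀ i, T (b i) = (l i : 𝕜) • b i) (x : E) :
    RCLike.re ⟪x, T x⟫_𝕜 = ∑ i, l i * ‖⟪b i, x⟫_𝕜‖ ^ 2 := by
  rw [← b.sum_inner_mul_inner, map_sum]
  refine Finset.sum_congr rfl fun i _ ↦ ?_
  rw [inner_apply_of_eigenbasis b hT, mul_left_comm, RCLike.re_ofReal_mul,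
    inner_mul_symm_re_eq_norm, norm_mul, norm_inner_symm, sq]

lemma re_inner_apply_self_le (hT : ∀ i, T (b i) = (l i : 𝕜) • b i) {x : E} {μ : ℝ}
    (hx : ∀ i, ⟪b i, x⟫_𝕜 ≠ 0 → l i ≤ μ) : RCLike.re ⟪x, T x⟫_𝕜 ≤ μ * ‖x‖ ^ 2 := by
  rw [re_inner_apply_self_eq_sum b hT, ← b.sum_sq_norm_inner_right, Finset.mul_sum]
  refine Finset.sum_le_sum fun i _ ↦ ?_
  by_cases hi : ⟪b i, x⟫_𝕜 = 0
  · simp [hi]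
  · gcongr
    exact hx i hi

lemma le_re_inner_apply_self (hT : ∀ i, T (b i) = (l i : 𝕜) • b i) {x : E} {μ : ℝ}
    (hx : ∀ i, ⟪b i, x⟫_𝕜 ≠ 0 → μ ≤ l i) : μ * ‖x‖ ^ 2 ≤ RCLike.re ⟪x, T x⟫_𝕜 := by
  have hneg : RCLike.re ⟪x, (-T) x⟫_𝕜 ≤ -μ * ‖x‖ ^ 2 :=
    re_inner_apply_self_le b (l := -l) (by simp [hT]) fun i hi ↦ neg_le_neg (hx i hi)
  simpa using hneg

end QuadraticForm

section EigenvalueComparison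

open scoped InnerProductSpace

lemma exists_ne_zero_forall_dual_apply_eq_zero {K V ι : Type*} [Field K] [AddCommGroup V]
    [Module K V] [Fintype ι] (f : ι → Module.Dual K V)
    (hf : Fintype.card ι < Module.finrank K V) : ∃ x ≠ 0, ∀ i, f i x = 0 := by
  have : FiniteDimensional K V := Module.finite_of_finrank_pos (by lia)
  have hker : (LinearMap.pi f).ker ≠ ⊥ :=
    LinearMap.ker_ne_bot_of_finrank_lt (by rwa [Module.finrank_fintype_fun_eq_card])
  obtain ⟨x, hx, hx0⟩ := (Submodule.ne_bot_iff _).mp hker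
  exact ⟨x, hx0, fun i ↦ congrFun hx i⟩

variable {𝕜 E F : Type*} [RCLike 𝕜]
  [NormedAddCommGroup E] [InnerProductSpace 𝕜 E] [NormedAddCommGroup F] [InnerProductSpace 𝕜 F]
  {m n : ℕ}

lemma exists_ne_zero_inner_eq_zero (hF : Module.finrank 𝕜 F = m) (v : Fin n → E) (w : Fin m → F)
    (A : F →ₗ[𝕜] E) {i : Fin n} {j : Fin m} (hij : (i : ℕ) ≤ j) :
    ∃ y ≠ 0, (∀ p < i, ⟪v p, A y⟫_𝕜 = 0) ∧ ∀ q > j, ⟪w q, y⟫_𝕜 = 0 := by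
  have hcard : Fintype.card (Finset.Iio i ⊕ Finset.Ioi j) < Module.finrank 𝕜 F := by
    simp only [Fintype.card_sum, Fintype.card_coe, Fin.card_Iio, Fin.card_Ioi, hF]
    lia
  obtain ⟨y, hy0, hy⟩ := exists_ne_zero_forall_dual_apply_eq_zero
    (Sum.elim (fun p : Finset.Iio i ↦ innerₛₗ 𝕜 (v p) ∘ₗ A)
      (fun q : Finset.Ioi j ↦ innerₛₗ 𝕜 (w q))) hcard
  exact ⟨y, hy0, fun p hp ↦ hy (.inl ⟨p, Finset.mem_Iio.mpr hp⟩),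
    fun q hq ↦ hy (.inr ⟨q, Finset.mem_Ioi.mpr hq⟩)⟩

theorem eigenvalue_le_sq_mul_eigenvalue_of_re_inner_le (b : OrthonormalBasis (Fin n) 𝕜 E)
    (b' : OrthonormalBasis (Fin m) 𝕜 F) {T : E →ₗ[𝕜] E} {R : F →ₗ[𝕜] F}
    {l : Fin n → ℝ} {l' : Fin m → ℝ} (hl : Antitone l) (hl' : Antitone l')
    (hT : ∀ i, T (b i) = (l i : 𝕜) • b i) (hR : ∀ j, R (b' j) = (l' j : 𝕜) • b' j)
    {A : F →ₗ[𝕜] E} {c : ℝ} (hA : ∀ y, ‖A y‖ ≤ c * ‖y‖)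
    (hRT : ∀ y, RCLike.re ⟪y, R y⟫_𝕜 ≤ RCLike.re ⟪A y, T (A y)⟫_𝕜)
    {i : Fin n} {j : Fin m} (hij : (i : ℕ) ≤ j) (hi : 0 ≤ l i) :
    l' j ≤ c ^ 2 * l i := by
  have hF : Module.finrank 𝕜 F = m := by
    rw [Module.finrank_eq_card_basis b'.toBasis, Fintype.card_fin]
  obtain ⟨y, hy0, hAy, hy⟩ := exists_ne_zero_inner_eq_zero hF b b' A hij
  have hlower : l' j * ‖y‖ ^ 2 ≤ RCLike.re ⟪y, R y⟫_𝕜 :=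
    le_re_inner_apply_self b' hR fun q hq ↦ hl' (not_lt.mp (mt (hy q) hq))
  have hupper : RCLike.re ⟪A y, T (A y)⟫_𝕜 ≤ l i * ‖A y‖ ^ 2 :=
    re_inner_apply_self_le b hT fun p hp ↦ hl (not_lt.mp (mt (hAy p) hp))
  refine le_of_mul_le_mul_right ?_ (by positivity : 0 < ‖y‖ ^ 2)
  calc l' j * ‖y‖ ^ 2 ≤ l i * ‖A y‖ ^ 2 := hlower.trans ((hRT y).trans hupper)
    _ ≤ l i * (c * ‖y‖) ^ 2 := by gcongr; exact hA y
    _ = c ^ 2 * l i * ‖y‖ ^ 2 := by ring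

end EigenvalueComparison

section Matrix

variable {𝕜 m n : Type*} [RCLike 𝕜] [Fintype m] [Fintype n]

open scoped InnerProductSpace in
lemma inner_toEuclideanLin_mul_mul_conjTranspose [DecidableEq m] [DecidableEq n]
    (P : Matrix n n 𝕜) (S : Matrix m n 𝕜) (y : EuclideanSpace 𝕜 m) :
    ⟪y, toEuclideanLin (S * P * Sᴴ) y⟫_𝕜 =
      ⟪toEuclideanLin Sᴴ y, toEuclideanLin P (toEuclideanLin Sᴴ y)⟫_𝕜 := by
  rw [toEuclideanLin_conjTranspose_eq_adjoint S, LinearMap.adjoint_inner_left,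
    ← toEuclideanLin_conjTranspose_eq_adjoint]
  simp [toLpLin_apply, mulVec_mulVec, Matrix.mul_assoc]

open scoped Matrix.Norms.Frobenius in
lemma frobNorm_eq_frobenius_norm (A : Matrix m n ℂ) : frobNorm A = ‖A‖ := by
  simp only [frobNorm, frobenius_norm_def, Real.sqrt_eq_rpow, Real.rpow_two]

open scoped Matrix.Norms.Frobenius in
lemma norm_toLp_mulVec_le_frobNorm (A : Matrix m n ℂ) (x : n → ℂ) :
    ‖WithLp.toLp 2 (A *ᵥ x)‖ ≤ frobNorm A * ‖WithLp.toLp 2 x‖ := by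
  rw [frobNorm_eq_frobenius_norm, ← frobenius_norm_replicateCol (ι := Unit),
    ← frobenius_norm_replicateCol (ι := Unit), replicateCol_mulVec]
  exact frobenius_norm_mul A _

open scoped Matrix.Norms.L2Operator in
lemma l2_opNorm_le_frobNorm [DecidableEq n] (A : Matrix m n ℂ) : ‖A‖ ≤ frobNorm A := by
  rw [l2_opNorm_def]
  exact ContinuousLinearMap.opNorm_le_bound _ (Real.sqrt_nonneg _) fun x ↦
    norm_toLp_mulVec_le_frobNorm A x.ofLp

lemma exists_orthonormalBasis_toEuclideanLin_apply_eq_smul {n : ℕ}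
    {M : Matrix (Fin n) (Fin n) 𝕜} {l : ℕ → ℝ} {v : ℕ → Fin n → 𝕜}
    (hv : ∀ i ∈ Finset.Icc 1 n, ∀ j ∈ Finset.Icc 1 n,
      star (v i) ⬝ᵥ v j = if i = j then (1 : 𝕜) else 0)
    (hM : ∀ j ∈ Finset.Icc 1 n, M *ᵥ v j = (l j : 𝕜) • v j) :
    ∃ b : OrthonormalBasis (Fin n) 𝕜 (EuclideanSpace 𝕜 (Fin n)),
      ∀ i : Fin n, toEuclideanLin M (b i) = (l (i + 1) : 𝕜) • b i := by
  have horth : Orthonormal 𝕜 fun i : Fin n ↦ WithLp.toLp 2 (v (i + 1)) := by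
    refine orthonormal_iff_ite.mpr fun i j ↦ ?_
    rw [EuclideanSpace.inner_toLp_toLp, dotProduct_comm, hv _ (by simp) _ (by simp)]
    simp [Fin.ext_iff]
  have hspan := horth.linearIndependent.span_eq_top_of_card_eq_finrank' (by simp)
  refine ⟨OrthonormalBasis.mk horth hspan.ge, fun i ↦ ?_⟩
  rw [OrthonormalBasis.coe_mk, toLpLin_toLp, toLin'_apply, hM _ (by simp), WithLp.toLp_smul]

open scoped Matrix.Norms.L2Operator in
theorem stmt10_general {m n : ℕ} (P : Matrix (Fin n) (Fin n) 𝕜) (S : Matrix (Fin m) (Fin n) 𝕜)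
    {c : ℝ} (hS : ‖S‖ ≤ c) (lamt lamh : ℕ → ℝ) (u : ℕ → Fin n → 𝕜) (w : ℕ → Fin m → 𝕜)
    (hlamt_anti : ∀ i j, 1 ≤ i → i ≤ j → j ≤ n → lamt j ≤ lamt i)
    (hlamh_anti : ∀ i j, 1 ≤ i → i ≤ j → j ≤ m → lamh j ≤ lamh i)
    (hu_orth : ∀ i ∈ Finset.Icc 1 n, ∀ j ∈ Finset.Icc 1 n,
      star (u i) ⬝ᵥ u j = if i = j then (1 : 𝕜) else 0)
    (hu_eig : ∀ j ∈ Finset.Icc 1 n, P *ᵥ u j = (lamt j : 𝕜) • u j)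
    (hw_orth : ∀ i ∈ Finset.Icc 1 m, ∀ j ∈ Finset.Icc 1 m,
      star (w i) ⬝ᵥ w j = if i = j then (1 : 𝕜) else 0)
    (hw_eig : ∀ j ∈ Finset.Icc 1 m, (S * P * Sᴴ) *ᵥ w j = (lamh j : 𝕜) • w j)
    {j : ℕ} (hj : 1 ≤ j) (hjm : j ≤ m) (hjn : j ≤ n) (hlamt_nonneg : 0 ≤ lamt j) :
    lamh j ≤ c ^ 2 * lamt j := by
  obtain ⟨b, hP⟩ := exists_orthonormalBasis_toEuclideanLin_apply_eq_smul hu_orth hu_eig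
  obtain ⟨b', hSPS⟩ := exists_orthonormalBasis_toEuclideanLin_apply_eq_smul hw_orth hw_eig
  obtain ⟨k, rfl⟩ := Nat.exists_eq_add_of_le' hj
  have hlt : Antitone fun i : Fin n ↦ lamt (i + 1) := fun p q hpq ↦
    hlamt_anti _ _ (by lia) (Nat.succ_le_succ hpq) q.isLt
  have hlh : Antitone fun i : Fin m ↦ lamh (i + 1) := fun p q hpq ↦
    hlamh_anti _ _ (by lia) (Nat.succ_le_succ hpq) q.isLt
  have hSy (y : EuclideanSpace 𝕜 (Fin m)) : ‖toEuclideanLin Sᴴ y‖ ≤ c * ‖y‖ :=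
    (l2_opNorm_mulVec Sᴴ y).trans (by rw [l2_opNorm_conjTranspose]; gcongr)
  exact eigenvalue_le_sq_mul_eigenvalue_of_re_inner_le b b' hlt hlh hP hSPS hSy
    (fun y ↦ (congrArg RCLike.re (inner_toEuclideanLin_mul_mul_conjTranspose P S y)).le)
    (i := ⟨k, hjn⟩) (j := ⟨k, hjm⟩) le_rfl hlamt_nonneg

end Matrix

/-- Deterministic core of Lemma 2 of the paper's Supplementary Material: if `P̃ ≥ 0` has
eigenvalues `λ̃_1 ≥ … ≥ λ̃_d ≥ 0`, `‖S‖ ≤ c` (Frobenius norm), and `P̂ = S P̃ S†` has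
eigenvalues `λ̂_1 ≥ … ≥ λ̂_d ≥ 0`, then for every `0 ≤ r ≤ d`,
`∑_{j=r+1}^{d} λ̂_j ≤ c² ∑_{j=r+1}^{d} λ̃_j`. -/
theorem stmt10 (d : ℕ) (hd : 1 ≤ d) (Ptil Phat S : Matrix (Fin d) (Fin d) ℂ)
    (hPtil : Ptil.PosSemidef)
    (c : ℝ) (hc : 0 < c) (hSnorm : frobNorm S ≤ c)
    (hPhat : Phat = S * Ptil * Sᴴ)
    (lamt lamh : ℕ → ℝ) (u w : ℕ → Fin d → ℂ)
    (hlamt_anti : ∀ i j, 1 ≤ i → i ≤ j → j ≤ d → lamt j ≤ lamt i)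
    (hlamt_nonneg : ∀ j, 1 ≤ j → j ≤ d → 0 ≤ lamt j)
    (hlamh_anti : ∀ i j, 1 ≤ i → i ≤ j → j ≤ d → lamh j ≤ lamh i)
    (hlamh_nonneg : ∀ j, 1 ≤ j → j ≤ d → 0 ≤ lamh j)
    (hu_orth : ∀ i ∈ Finset.Icc 1 d, ∀ j ∈ Finset.Icc 1 d,
      star (u i) ⬝ᵥ u j = if i = j then (1 : ℂ) else 0)
    (hu_eig : ∀ j ∈ Finset.Icc 1 d, Ptil *ᵥ u j = (lamt j : ℂ) • u j)
    (hw_orth : ∀ i ∈ Finset.Icc 1 d, ∀ j ∈ Finset.Icc 1 d,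
      star (w i) ⬝ᵥ w j = if i = j then (1 : ℂ) else 0)
    (hw_eig : ∀ j ∈ Finset.Icc 1 d, Phat *ᵥ w j = (lamh j : ℂ) • w j)
    (r : ℕ) (hr : r ≤ d) :
    ∑ j ∈ Finset.Icc (r + 1) d, lamh j ≤ c ^ 2 * ∑ j ∈ Finset.Icc (r + 1) d, lamt j := by
  rw [Finset.mul_sum]
  refine Finset.sum_le_sum fun j hj ↦ ?_
  obtain ⟨hrj, hjd⟩ := Finset.mem_Icc.mp hj
  exact stmt10_general Ptil S ((l2_opNorm_le_frobNorm S).trans hSnorm) lamt lamh u w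
    hlamt_anti hlamh_anti hu_orth hu_eig hw_orth (hPhat ▸ hw_eig) (by lia) hjd hjd
    (hlamt_nonneg j (by lia) hjd)
end
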